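/- Let n ≥ 1, let 1 < α ≤ 2, γ > 0, t_c > 0, and suppose ε : ℝ → ℝⁿ follows the noise-free FOZNN convergence-phase dynamics on (0, t_c), now with order parameter α ∈ (1, 2]. Define V(t) = ‖ε(t)‖/(t_c − t). Then for every t ∈ (0, t_c), V is differentiable at t and its derivative satisfies V'(t) ≤ −γ t V(t)²/(t_c (t_c − t)) + V(t)/t_c. -/

import Mathlib

/-! Along `ε' = c • ε` the velocity is radial, so `‖ε‖' = c ‖ε‖`, and `V = ‖ε‖ / (tc - t)` has
`V' = (c + 1 / (tc - t)) V`. For `c = -s (1 / (tc - t) + γ ‖ε‖ / (tc - t) ^ 2)` this is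
`V' = V / (tc - t) * (1 - s (1 + γ V))`, which is nonincreasing in the gain `s`. Replacing
`s = (t / tc) ^ (α - 1)` by its lower bound `t / tc` gives exactly the claimed right-hand side. -/

open Asymptotics

section NormDerivative

variable {E : Type*} [NormedAddCommGroup E] [NormedSpace ℝ E] {f : ℝ → E} {c t : ℝ}

theorem hasDerivAt_norm_of_hasDerivAt_zero (hf : HasDerivAt f 0 t) :
    HasDerivAt (fun x => ‖f x‖) 0 t := by
  simp only [hasDerivAt_iff_isLittleO, smul_zero, sub_zero] at hf ⊢
  exact (isBigO_of_le _ fun x => abs_norm_sub_norm_le (f x) (f t)).trans_isLittleO hf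

-- The integrating factor `exp (-c (x - t))` brings the derivative at `t` to `0`, where the
-- Lipschitz bound of the norm replaces its differentiability.
theorem hasDerivAt_norm_of_hasDerivAt_smul_self (hf : HasDerivAt f (c • f t) t) :
    HasDerivAt (fun x => ‖f x‖) (c * ‖f t‖) t := by
  have hasDerivAt_exp (a : ℝ) : HasDerivAt (fun x => Real.exp (a * (x - t))) a t := by
    simpa using (((hasDerivAt_id t).sub_const t).const_mul a).exp
  have hrescaled : HasDerivAt (fun x => Real.exp (-c * (x - t)) • f x) 0 t := by
    simpa using (hasDerivAt_exp (-c)).fun_smul hf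
  have hnorm (x : ℝ) :
      ‖f x‖ = Real.exp (c * (x - t)) * ‖Real.exp (-c * (x - t)) • f x‖ := by
    rw [norm_smul, Real.norm_of_nonneg (Real.exp_nonneg _), ← mul_assoc, ← Real.exp_add]
    simp
  rw [funext hnorm]
  simpa using (hasDerivAt_exp c).fun_mul (hasDerivAt_norm_of_hasDerivAt_zero hrescaled)

end NormDerivative

theorem div_le_rpow_div_rpow {x y p : ℝ} (hx : 0 ≤ x) (hxy : x ≤ y) (hp : p ≤ 1) :
    x / y ≤ x ^ p / y ^ p := by
  have hy : 0 ≤ y := hx.trans hxy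
  rw [← Real.div_rpow hx hy]
  exact Real.self_le_rpow_of_le_one (div_nonneg hx hy) (div_le_one_of_le₀ hxy hy) hp

theorem lyapunov_rate_le_of_le_gain {V γ s t tc : ℝ} (hV : 0 ≤ V) (hγ : 0 ≤ γ) (htc : tc ≠ 0)
    (ht : t < tc) (hs : t / tc ≤ s) :
    V / (tc - t) * (1 - s * (1 + γ * V)) ≤ -(γ * t * V ^ 2 / (tc * (tc - t))) + V / tc := by
  have htime : 0 < tc - t := sub_pos.mpr ht
  calc
    V / (tc - t) * (1 - s * (1 + γ * V)) ≤ V / (tc - t) * (1 - t / tc * (1 + γ * V)) := by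
      gcongr
    _ = -(γ * t * V ^ 2 / (tc * (tc - t))) + V / tc := by
      field_simp
      ring

/-- The Lyapunov function `V` of the convergence phase: the error norm relative to the time left
before the deadline `tc`. At `t = tc` it takes the junk value `0`. -/
noncomputable def errorLyapunov {E : Type*} [Norm E] (tc : ℝ) (ε : ℝ → E) (t : ℝ) : ℝ :=
  ‖ε t‖ / (tc - t)

section Lyapunov

variable {E : Type*} [NormedAddCommGroup E] [NormedSpace ℝ E] {ε : ℝ → E} {c γ s t tc : ℝ}

theorem hasDerivAt_errorLyapunov (ht : t ≠ tc) (hε : HasDerivAt ε (c • ε t) t) :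
    HasDerivAt (errorLyapunov tc ε) ((c + 1 / (tc - t)) * errorLyapunov tc ε t) t := by
  have htime : tc - t ≠ 0 := sub_ne_zero.mpr ht.symm
  have hquotient : HasDerivAt (errorLyapunov tc ε)
      ((c * ‖ε t‖ * (tc - t) - ‖ε t‖ * -1) / (tc - t) ^ 2) t :=
    (hasDerivAt_norm_of_hasDerivAt_smul_self hε).fun_div ((hasDerivAt_id t).const_sub tc) htime
  convert hquotient using 1
  rw [errorLyapunov]
  field_simp
  ring

theorem hasDerivAt_errorLyapunov_of_gain (ht : t ≠ tc)
    (hε : HasDerivAt ε ((-s * (1 / (tc - t) + γ * ‖ε t‖ / (tc - t) ^ 2)) • ε t) t) :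
    HasDerivAt (errorLyapunov tc ε)
      (errorLyapunov tc ε t / (tc - t) * (1 - s * (1 + γ * errorLyapunov tc ε t))) t := by
  have htime : tc - t ≠ 0 := sub_ne_zero.mpr ht.symm
  convert hasDerivAt_errorLyapunov ht hε using 1
  rw [errorLyapunov]
  field_simp
  ring

end Lyapunov

theorem foznn_higher_order_lyapunov_derivative_general
    {E : Type*} [NormedAddCommGroup E] [NormedSpace ℝ E] {α γ tc t : ℝ} {ε : ℝ → E}
    (hα : α ≤ 2) (hγ : 0 ≤ γ) (ht : t ∈ Set.Ioo 0 tc)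
    (hε : HasDerivAt ε
      ((-(t ^ (α - 1) / tc ^ (α - 1)) *
        (1 / (tc - t) + γ * ‖ε t‖ / (tc - t) ^ 2)) • ε t) t) :
    DifferentiableAt ℝ (errorLyapunov tc ε) t ∧
      deriv (errorLyapunov tc ε) t ≤
        -(γ * t * errorLyapunov tc ε t ^ 2 / (tc * (tc - t))) + errorLyapunov tc ε t / tc := by
  have htc : tc ≠ 0 := (ht.1.trans ht.2).ne'
  have hderiv := hasDerivAt_errorLyapunov_of_gain ht.2.ne hε
  have hnonneg : 0 ≤ errorLyapunov tc ε t :=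
    div_nonneg (norm_nonneg _) (sub_nonneg.mpr ht.2.le)
  have hgain : t / tc ≤ t ^ (α - 1) / tc ^ (α - 1) :=
    div_le_rpow_div_rpow ht.1.le ht.2.le (by linarith)
  exact ⟨hderiv.differentiableAt,
    hderiv.deriv.trans_le (lyapunov_rate_le_of_le_gain hnonneg hγ htc ht.2 hgain)⟩

/-- For `1 < α ≤ 2` and `ε` following the noise-free FOZNN convergence-phase
dynamics on `(0, t_c)`, with `V(t) = ‖ε(t)‖/(t_c − t)`, for every `t ∈ (0, t_c)` the function
`V` is differentiable at `t` with `V'(t) ≤ −γ t V(t)²/(t_c (t_c − t)) + V(t)/t_c`. -/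
theorem foznn_higher_order_lyapunov_derivative
    (n : ℕ) (hn : 1 ≤ n) (α γ tc : ℝ)
    (hα1 : 1 < α) (hα2 : α ≤ 2) (hγ : 0 < γ) (htc : 0 < tc)
    (ε : ℝ → EuclideanSpace ℝ (Fin n))
    (hdyn : ∀ t ∈ Set.Ioo (0 : ℝ) tc, ε t ≠ 0 ∧
      HasDerivAt ε
        ((-(t ^ (α - 1) / tc ^ (α - 1)) *
          (1 / (tc - t) + γ * ‖ε t‖ / (tc - t) ^ 2)) • ε t) t)
    (V : ℝ → ℝ) (hV : ∀ t, V t = ‖ε t‖ / (tc - t)) :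
    ∀ t ∈ Set.Ioo (0 : ℝ) tc,
      DifferentiableAt ℝ V t ∧
      deriv V t ≤ -(γ * t * (V t) ^ 2 / (tc * (tc - t))) + V t / tc := by
  obtain rfl : V = errorLyapunov tc ε := funext hV
  exact fun t ht => foznn_higher_order_lyapunov_derivative_general hα2 hγ.le ht (hdyn t ht).2
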